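/- Two QR-tetrahedra (tetrahedra with vertices in a packing Ω, all edges of length in [2, 251/100]) that share a common face do not overlap: their interiors are disjoint, i.e., the two tetrahedra lie on opposite sides of the plane of the common face or coincide. More precisely: if T₁ = conv{a,b,c,d} and T₂ = conv{a,b,c,e} are two such tetrahedra with d ≠ e lying strictly on the same side of the plane through a, b, c, then ‖d − e‖ < 2, contradicting the packing condition; hence d and e lie on opposite sides (or on) the plane abc, so the interiors of T₁ and T₂ are disjoint. -/

import Mathlib

/-!
A point common to two polytopes `conv t₁` and `conv t₂` but outside `conv (t₁ ∩ t₂)` yields an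
affine dependence `∑ wᵢ = 0`, `∑ wᵢ pᵢ = 0` whose positive weights sit on `t₁` and negative weights
on `t₂`. Squared distances satisfy `∑ wᵢ wⱼ ‖pᵢ - pⱼ‖² = 0` along it. Bounding the terms of equal
sign by `R²` and those of opposite sign by `r²` leaves
`R² ∑ wᵢ² ≤ ½ (R² - r²) (∑ |wᵢ|)²`, and Cauchy–Schwarz over `n` points gives `n r² ≤ (n - 2) R²`.
For `n = 5`, `r = 2`, `R = 251 / 100` this reads `20 ≤ 18.9003`.
Hence the two tetrahedra meet exactly in the triangle spanned by the common vertices, which has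
empty interior.
-/

open Module
open scoped Finset

section AffineDependence

variable {ι V P : Type*} [NormedAddCommGroup V] [InnerProductSpace ℝ V] [MetricSpace P]
  [NormedAddTorsor V P] {s : Finset ι} {w : ι → ℝ} {p : ι → P}

theorem sum_mul_mul_dist_sq_eq_zero_of_weightedVSub_eq_zero (hw : ∑ i ∈ s, w i = 0)
    (hp : s.weightedVSub p w = (0 : V)) :
    ∑ i ∈ s, ∑ j ∈ s, w i * w j * dist (p i) (p j) ^ 2 = 0 := by
  have h := EuclideanGeometry.inner_weightedVSub p hw p hw
  rw [hp, inner_zero_left] at h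
  simp only [sq]
  linarith

variable {r R : ℝ}

theorem sq_mul_sum_sq_le_of_weightedVSub_eq_zero (hr : 0 ≤ r) (hw : ∑ i ∈ s, w i = 0)
    (hp : s.weightedVSub p w = (0 : V))
    (hopp : ∀ i ∈ s, ∀ j ∈ s, w i * w j < 0 → r ≤ dist (p i) (p j))
    (hsame : ∀ i ∈ s, ∀ j ∈ s, i ≠ j → 0 < w i * w j → dist (p i) (p j) ≤ R) :
    R ^ 2 * ∑ i ∈ s, w i ^ 2 ≤ (R ^ 2 - r ^ 2) / 2 * (∑ i ∈ s, |w i|) ^ 2 := by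
  classical
  have hterm : ∀ i ∈ s, ∀ j ∈ s, w i * w j * dist (p i) (p j) ^ 2 ≤
      (R ^ 2 + r ^ 2) / 2 * (w i * w j) + (R ^ 2 - r ^ 2) / 2 * (|w i| * |w j|) -
        if i = j then R ^ 2 * w i ^ 2 else 0 := by
    intro i hi j hj
    rw [← abs_mul]
    split_ifs with hij
    · subst hij
      rw [dist_self, abs_mul_self]
      exact le_of_eq (by ring)
    · rcases lt_trichotomy (w i * w j) 0 with hneg | hzero | hpos
      · have hd : r ^ 2 ≤ dist (p i) (p j) ^ 2 := pow_le_pow_left₀ hr (hopp i hi j hj hneg) 2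
        rw [abs_of_neg hneg]
        linarith [mul_le_mul_of_nonpos_left hd hneg.le]
      · simp [hzero]
      · have hd : dist (p i) (p j) ^ 2 ≤ R ^ 2 :=
          pow_le_pow_left₀ dist_nonneg (hsame i hi j hj hij hpos) 2
        rw [abs_of_pos hpos]
        linarith [mul_le_mul_of_nonneg_left hd hpos.le]
  have hsum := Finset.sum_le_sum fun i hi ↦ Finset.sum_le_sum (hterm i hi)
  simp only [sum_mul_mul_dist_sq_eq_zero_of_weightedVSub_eq_zero hw hp, Finset.sum_sub_distrib,
    Finset.sum_add_distrib, ← Finset.mul_sum, ← Finset.sum_mul, hw, Finset.sum_ite_eq,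
    Finset.sum_ite_mem, Finset.inter_self] at hsum
  linarith

theorem mul_sq_le_of_weightedVSub_eq_zero {n : ℕ} (hn : #s ≤ n) (hr : 0 ≤ r)
    (hw : ∑ i ∈ s, w i = 0) (hp : s.weightedVSub p w = (0 : V)) (hne : ∃ i ∈ s, w i ≠ 0)
    (hopp : ∀ i ∈ s, ∀ j ∈ s, w i * w j < 0 → r ≤ dist (p i) (p j))
    (hsame : ∀ i ∈ s, ∀ j ∈ s, i ≠ j → 0 < w i * w j → dist (p i) (p j) ≤ R) :
    n * r ^ 2 ≤ (n - 2) * R ^ 2 := by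
  obtain ⟨k, hk, hwk⟩ := hne
  have hsq_pos : 0 < ∑ i ∈ s, w i ^ 2 :=
    Finset.sum_pos' (fun i _ ↦ sq_nonneg (w i)) ⟨k, hk, by positivity⟩
  have habs_pos : 0 < ∑ i ∈ s, |w i| :=
    Finset.sum_pos' (fun i _ ↦ abs_nonneg (w i)) ⟨k, hk, by positivity⟩
  have hcauchy : (∑ i ∈ s, |w i|) ^ 2 ≤ n * ∑ i ∈ s, w i ^ 2 :=
    calc (∑ i ∈ s, |w i|) ^ 2 ≤ #s * ∑ i ∈ s, |w i| ^ 2 := sq_sum_le_card_mul_sum_sq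
      _ = #s * ∑ i ∈ s, w i ^ 2 := by simp only [sq_abs]
      _ ≤ n * ∑ i ∈ s, w i ^ 2 := by gcongr
  have hle := sq_mul_sum_sq_le_of_weightedVSub_eq_zero hr hw hp hopp hsame
  have hrR : 0 ≤ (R ^ 2 - r ^ 2) / 2 :=
    nonneg_of_mul_nonneg_left ((by positivity : 0 ≤ R ^ 2 * ∑ i ∈ s, w i ^ 2).trans hle)
      (pow_pos habs_pos 2)
  have hR : R ^ 2 ≤ (R ^ 2 - r ^ 2) / 2 * n := by
    refine le_of_mul_le_mul_right ?_ hsq_pos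
    rw [mul_assoc]
    exact hle.trans (mul_le_mul_of_nonneg_left hcauchy hrR)
  linarith

end AffineDependence

theorem exists_affine_dependence_of_notMem_convexHull_inter {𝕜 E : Type*} [Field 𝕜] [LinearOrder 𝕜]
    [IsStrictOrderedRing 𝕜] [AddCommGroup E] [Module 𝕜 E] [DecidableEq E] {t₁ t₂ : Finset E} {x : E}
    (hx₁ : x ∈ convexHull 𝕜 (t₁ : Set E)) (hx₂ : x ∈ convexHull 𝕜 (t₂ : Set E))
    (hx : x ∉ convexHull 𝕜 (t₁ ∩ t₂ : Set E)) :
    ∃ w : E → 𝕜, ∑ y ∈ t₁ ∪ t₂, w y = 0 ∧ ∑ y ∈ t₁ ∪ t₂, w y • y = 0 ∧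
      (∃ y ∈ t₁ ∪ t₂, w y ≠ 0) ∧ (∀ y, 0 < w y → y ∈ t₁) ∧ ∀ y, w y < 0 → y ∈ t₂ := by
  rw [Finset.mem_convexHull'] at hx₁ hx₂
  obtain ⟨u, hu_nonneg, hu_sum, hu⟩ := hx₁
  obtain ⟨v, hv_nonneg, hv_sum, hv⟩ := hx₂
  let w (y : E) : 𝕜 := (if y ∈ t₁ then u y else 0) - if y ∈ t₂ then v y else 0
  refine ⟨w, by simp [w, hu_sum, hv_sum], by simp [w, sub_smul, ite_smul, hu, hv], ?_, ?_, ?_⟩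
  · contrapose! hx
    have hu_zero : ∀ y ∈ t₁, y ∉ t₁ ∩ t₂ → u y = 0 := fun y hy₁ hy ↦ by
      have hy₂ : y ∉ t₂ := fun hy₂ ↦ hy (Finset.mem_inter_of_mem hy₁ hy₂)
      simpa [w, hy₁, hy₂] using hx y (Finset.mem_union_left t₂ hy₁)
    rw [← Finset.coe_inter, Finset.mem_convexHull']
    refine ⟨u, fun y hy ↦ hu_nonneg y (Finset.mem_of_mem_inter_left hy), ?_, ?_⟩
    · rw [Finset.sum_subset Finset.inter_subset_left hu_zero, hu_sum]
    · rw [Finset.sum_subset Finset.inter_subset_left fun y hy₁ hy ↦ by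
        rw [hu_zero y hy₁ hy, zero_smul], hu]
  · intro y hy
    by_contra hy₁
    by_cases hy₂ : y ∈ t₂
    · exact (hv_nonneg y hy₂).not_gt (by simpa [w, hy₁, hy₂] using hy)
    · simp [w, hy₁, hy₂] at hy
  · intro y hy
    by_contra hy₂
    by_cases hy₁ : y ∈ t₁
    · exact (hu_nonneg y hy₁).not_gt (by simpa [w, hy₁, hy₂] using hy)
    · simp [w, hy₁, hy₂] at hy

theorem convexHull_inter_eq_of_dist_bounds {E : Type*} [NormedAddCommGroup E]
    [InnerProductSpace ℝ E] [DecidableEq E] {t₁ t₂ : Finset E} {n : ℕ} {r R : ℝ}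
    (hn : #(t₁ ∪ t₂) ≤ n) (hr : 0 ≤ r) (hrR : (n - 2) * R ^ 2 < n * r ^ 2)
    (hcross : ∀ p ∈ t₁, ∀ q ∈ t₂, p ≠ q → r ≤ dist p q)
    (h₁ : (t₁ : Set E).Pairwise fun p q ↦ dist p q ≤ R)
    (h₂ : (t₂ : Set E).Pairwise fun p q ↦ dist p q ≤ R) :
    convexHull ℝ (t₁ : Set E) ∩ convexHull ℝ t₂ = convexHull ℝ (t₁ ∩ t₂) := by
  refine Set.Subset.antisymm (fun x hx ↦ ?_) (Set.subset_inter
    (convexHull_mono Set.inter_subset_left) (convexHull_mono Set.inter_subset_right))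
  by_contra hx_notMem
  obtain ⟨w, hw, hwp, hne, hpos, hneg⟩ :=
    exists_affine_dependence_of_notMem_convexHull_inter hx.1 hx.2 hx_notMem
  refine hrR.not_ge (mul_sq_le_of_weightedVSub_eq_zero (p := id) hn hr hw ?_ hne ?_ ?_)
  · simpa [(t₁ ∪ t₂).weightedVSub_eq_linear_combination hw] using hwp
  · intro p _ q _ hpq
    rcases mul_neg_iff.1 hpq with ⟨hp, hq⟩ | ⟨hp, hq⟩
    · exact hcross p (hpos p hp) q (hneg q hq) (by rintro rfl; exact hp.not_gt hq)
    · rw [dist_comm]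
      exact hcross q (hpos q hq) p (hneg p hp) (by rintro rfl; exact hp.not_gt hq)
  · intro p _ q _ hpq hmul
    rcases pos_and_pos_or_neg_and_neg_of_mul_pos hmul with ⟨hp, hq⟩ | ⟨hp, hq⟩
    · exact h₁ (hpos p hp) (hpos q hq) hpq
    · exact h₂ (hneg p hp) (hneg q hq) hpq

theorem interior_convexHull_eq_empty_of_card_le_finrank {E : Type*} [NormedAddCommGroup E]
    [NormedSpace ℝ E] [FiniteDimensional ℝ E] {s : Finset E} (hs : #s ≤ finrank ℝ E) :
    interior (convexHull ℝ (s : Set E)) = ∅ := by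
  by_contra! h
  have : Nonempty s := (convexHull_nonempty_iff.1 (h.mono interior_subset)).to_subtype
  have hspan : vectorSpan ℝ (s : Set E) = ⊤ := by
    rw [← direction_affineSpan, interior_convexHull_nonempty_iff_affineSpan_eq_top.1 h,
      AffineSubspace.direction_top]
  have hlt := finrank_vectorSpan_range_add_one_le ℝ ((↑) : s → E)
  rw [Subtype.range_coe_subtype, Finset.setOfPred_mem, hspan, finrank_top, Fintype.card_coe] at hlt
  lia

theorem qr_tetrahedra_common_face_no_overlap_general {E : Type*} [NormedAddCommGroup E]
    [InnerProductSpace ℝ E] [FiniteDimensional ℝ E] {r R : ℝ} (hr : 0 < r)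
    (hrR : finrank ℝ E * R ^ 2 < (finrank ℝ E + 2) * r ^ 2) {F : Finset E}
    (hF : #F ≤ finrank ℝ E) {d e : E} (hde : r ≤ dist d e)
    (hd : (insert d F : Set E).Pairwise fun p q ↦ r ≤ dist p q ∧ dist p q ≤ R)
    (he : (insert e F : Set E).Pairwise fun p q ↦ r ≤ dist p q ∧ dist p q ≤ R) :
    interior (convexHull ℝ (insert d F : Set E)) ∩
      interior (convexHull ℝ (insert e F : Set E)) = ∅ := by
  classical
  have hne : d ≠ e := dist_pos.1 (hr.trans_le hde)
  have hinter : insert d F ∩ insert e F = F := by grind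
  have hcard : #(insert d F ∪ insert e F) ≤ finrank ℝ E + 2 := by grind
  have hcross : ∀ p ∈ insert d F, ∀ q ∈ insert e F, p ≠ q → r ≤ dist p q := by
    intro p hp q hq hpq
    rcases Finset.mem_insert.1 hp with rfl | hp
    · rcases Finset.mem_insert.1 hq with rfl | hq
      · exact hde
      · exact (hd (.inl rfl) (.inr hq) hpq).1
    · exact (he (.inr hp) (by simpa using hq) hpq).1
  have hhull : convexHull ℝ (insert d F : Set E) ∩ convexHull ℝ (insert e F : Set E) =
      convexHull ℝ F := by
    rw [← Finset.coe_insert, ← Finset.coe_insert, convexHull_inter_eq_of_dist_bounds hcard hr.le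
      (by push_cast; rwa [add_sub_cancel_right]) hcross (by simpa using hd.mono' fun _ _ h ↦ h.2)
      (by simpa using he.mono' fun _ _ h ↦ h.2), ← Finset.coe_inter, hinter]
  rw [← interior_inter, hhull, interior_convexHull_eq_empty_of_card_le_finrank hF]

/-- Two QR-tetrahedra of a packing `Ω` that share a common face do not overlap: if
`T₁ = conv{a,b,c,d}` and `T₂ = conv{a,b,c,e}` have all vertices in `Ω` and all edge
lengths in `[2, 251/100]`, with `d ≠ e`, then the interiors of `T₁` and `T₂` are
disjoint. -/
theorem qr_tetrahedra_common_face_no_overlap (Ω : Set (EuclideanSpace ℝ (Fin 3)))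
    (hpack : ∀ v ∈ Ω, ∀ w ∈ Ω, v ≠ w → 2 ≤ dist v w)
    (a b c d e : EuclideanSpace ℝ (Fin 3))
    (ha : a ∈ Ω) (hb : b ∈ Ω) (hc : c ∈ Ω) (hd : d ∈ Ω) (he : e ∈ Ω)
    (hde : d ≠ e)
    (hT₁ : ∀ p ∈ ({a, b, c, d} : Set (EuclideanSpace ℝ (Fin 3))),
      ∀ q ∈ ({a, b, c, d} : Set (EuclideanSpace ℝ (Fin 3))), p ≠ q →
        2 ≤ dist p q ∧ dist p q ≤ 251 / 100)
    (hT₂ : ∀ p ∈ ({a, b, c, e} : Set (EuclideanSpace ℝ (Fin 3))),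
      ∀ q ∈ ({a, b, c, e} : Set (EuclideanSpace ℝ (Fin 3))), p ≠ q →
        2 ≤ dist p q ∧ dist p q ≤ 251 / 100) :
    interior (convexHull ℝ ({a, b, c, d} : Set (EuclideanSpace ℝ (Fin 3)))) ∩
      interior (convexHull ℝ ({a, b, c, e} : Set (EuclideanSpace ℝ (Fin 3)))) = ∅ := by
  classical
  have hperm (v : EuclideanSpace ℝ (Fin 3)) :
      ({a, b, c, v} : Set (EuclideanSpace ℝ (Fin 3))) = insert v ↑({a, b, c} : Finset _) := by
    grind
  simp only [hperm] at hT₁ hT₂ ⊢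
  exact qr_tetrahedra_common_face_no_overlap_general two_pos (by norm_num)
    (by simpa using Finset.card_le_three) (hpack d hd e he hde)
    (fun p hp q hq ↦ hT₁ p hp q hq) (fun p hp q hq ↦ hT₂ p hp q hq)
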